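/- There exists N such that for all n ≥ N the following holds. Let G be any set of at most 2^{n/4} query functions g : {0,1}^n → {−1,+1}, and let P = {s ∈ {0,1}^n \ {0^n} : ¬⊕_s is 2^{−n/4}-independent from every g ∈ G}. Then |P| ≥ 2^n − 2^{3n/4+2} − 1 (in particular P is nonempty), and for every x ∈ X_n, the number of s ∈ P with s·x ≡ 0 (mod 2) is at most (1/2 + 1/2^{n/4−2})·|P|. Consequently, no matter which x ∈ X_n is output after the queries in G are answered by the value E_{y∈{0,1}^n}[g(y)], a secret s drawn uniformly from P satisfies s·x ≡ 0 with probability at most 1/2 + 1/2^{n/4−2}. -/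

import Mathlib

/-- Expectation of `g` over the uniform distribution on the finite set `S`. -/
noncomputable def expectOn {α : Type*} (S : Set α) (g : α → ℝ) : ℝ :=
  (∑ᶠ x ∈ S, g x) / S.ncard

/-- The positive set `S_s = {x ∈ {0,1}^n \ {0^n} : s·x ≡ 0 (mod 2)}` of the
negative parity predicate `¬⊕_s`. -/
def Spos (n : ℕ) (s : Fin n → ZMod 2) : Set (Fin n → ZMod 2) :=
  {x | x ≠ 0 ∧ ∑ i, s i * x i = 0}

/-- `¬⊕_s` is `ξ`-independent from the query function `g`. -/
def XiIndep2 (n : ℕ) (s : Fin n → ZMod 2) (g : (Fin n → ZMod 2) → ℝ) (ξ : ℝ) : Prop :=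
  |expectOn (Spos n s) g - expectOn Set.univ g| ≤ ξ

/-
The expectation of `g` over `S_s` differs from its global expectation by essentially the Walsh
coefficient of `g` at `s` divided by `2^n`, so a violation of `ξ`-independence forces a coefficient
of size at least `ξ 2^n / 2`. The parity characters are orthogonal, hence by Bessel's inequality a
query bounded by `1` excludes at most `4 / ξ²` secrets. With `ξ = 2^(-n/4)` and at most `2^(n/4)`
queries, all but `4 · 2^(3n/4) + 1` secrets survive. A nonzero point `x` is orthogonal to only
`2^n / 2 - 1` nonzero secrets, which is hardly more than half of the survivors.
-/

open Finset Function
open scoped ComplexConjugate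

section CharacterBessel

variable {A ι 𝕜 : Type*} [AddCommGroup A] [Fintype A] [RCLike 𝕜] {ψ : ι → AddChar A 𝕜}

theorem orthonormal_addChar (hψ : Injective ψ) :
    Orthonormal 𝕜 fun i ↦ (√(Fintype.card A) : 𝕜)⁻¹ • WithLp.toLp 2 (ψ i : A → 𝕜) := by
  classical
  have hsqrt : ((√(Fintype.card A) : ℝ) : 𝕜) * (√(Fintype.card A) : ℝ) = Fintype.card A := by
    rw [← RCLike.ofReal_mul, Real.mul_self_sqrt (Nat.cast_nonneg _), RCLike.ofReal_natCast]
  rw [orthonormal_iff_ite]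
  intro i j
  have h := AddChar.wInner_cWeight_eq_boole (ψ i) (ψ j)
  rw [RCLike.wInner_cWeight_eq_expect, Fintype.expect_eq_sum_div_card] at h
  rw [inner_smul_left, inner_smul_right, PiLp.inner_apply, ← mul_assoc, map_inv₀,
    RCLike.conj_ofReal, ← mul_inv, hsqrt, inv_mul_eq_div, h]
  simp only [hψ.eq_iff]

theorem sum_norm_sq_sum_mul_conj_le (hψ : Injective ψ) (S : Finset ι) (f : A → 𝕜) :
    ∑ i ∈ S, ‖∑ x, f x * conj (ψ i x)‖ ^ 2 ≤ Fintype.card A * ∑ x, ‖f x‖ ^ 2 := by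
  have hcard : (0 : ℝ) < Fintype.card A := Nat.cast_pos.2 Fintype.card_pos
  have hbessel := (orthonormal_addChar hψ).sum_inner_products_le (s := S) (WithLp.toLp 2 f)
  have hinner (i : ι) :
      inner 𝕜 ((√(Fintype.card A) : 𝕜)⁻¹ • WithLp.toLp 2 (ψ i : A → 𝕜)) (WithLp.toLp 2 f) =
        (√(Fintype.card A) : 𝕜)⁻¹ * ∑ x, f x * conj (ψ i x) := by
    simp [inner_smul_left, PiLp.inner_apply]
  simp_rw [hinner, norm_mul, mul_pow, ← mul_sum, EuclideanSpace.norm_sq_eq] at hbessel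
  rwa [norm_inv, RCLike.norm_ofReal, inv_pow, sq_abs, Real.sq_sqrt hcard.le, inv_mul_le_iff₀ hcard]
    at hbessel

theorem card_mul_sq_le_of_le_norm_sum_mul_conj (hψ : Injective ψ) {S : Finset ι} {f : A → 𝕜}
    (hf : ∀ x, ‖f x‖ ≤ 1) {t : ℝ} (ht : 0 ≤ t) (hS : ∀ i ∈ S, t ≤ ‖∑ x, f x * conj (ψ i x)‖) :
    #S * t ^ 2 ≤ (Fintype.card A : ℝ) ^ 2 :=
  calc
    #S * t ^ 2 = ∑ _i ∈ S, t ^ 2 := by rw [sum_const, nsmul_eq_mul]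
    _ ≤ ∑ i ∈ S, ‖∑ x, f x * conj (ψ i x)‖ ^ 2 := by gcongr with i hi; exact hS i hi
    _ ≤ Fintype.card A * ∑ x, ‖f x‖ ^ 2 := sum_norm_sq_sum_mul_conj_le hψ S f
    _ ≤ Fintype.card A * ∑ _x : A, (1 : ℝ) := by
      gcongr with x
      exact pow_le_one₀ (norm_nonneg _) (hf x)
    _ = (Fintype.card A : ℝ) ^ 2 := by rw [sum_const, nsmul_one, card_univ, sq]

end CharacterBessel

section Parity

variable {ι : Type*} [Fintype ι]

theorem zmod_two_eq_iff_eq_zero_iff (a b : ZMod 2) : a = b ↔ (a = 0 ↔ b = 0) := by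
  decide +revert

/-- The real character `x ↦ (-1) ^ (s · x)` of `{0,1}^ι`, written as a case distinction because
`s · x` lies in `ZMod 2`. -/
def parityChar (s : ι → ZMod 2) : AddChar (ι → ZMod 2) ℝ where
  toFun x := if s ⬝ᵥ x = 0 then 1 else -1
  map_zero_eq_one' := by rw [dotProduct_zero, if_pos rfl]
  map_add_eq_mul' x y := by
    rw [dotProduct_add]
    have hadd : s ⬝ᵥ x + s ⬝ᵥ y = 0 ↔ (s ⬝ᵥ x = 0 ↔ s ⬝ᵥ y = 0) := by
      rw [CharTwo.add_eq_zero, zmod_two_eq_iff_eq_zero_iff]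
    simp only [hadd]
    by_cases hx : s ⬝ᵥ x = 0 <;> by_cases hy : s ⬝ᵥ y = 0 <;> simp [hx, hy]

theorem parityChar_apply (s x : ι → ZMod 2) :
    parityChar s x = if s ⬝ᵥ x = 0 then 1 else -1 := rfl

theorem parityChar_eq_one_iff {s x : ι → ZMod 2} : parityChar s x = 1 ↔ s ⬝ᵥ x = 0 := by
  rw [parityChar_apply]
  split_ifs with h <;> norm_num [h]

theorem parityChar_injective :
    Injective (parityChar : (ι → ZMod 2) → AddChar (ι → ZMod 2) ℝ) := by
  classical
  intro s t hst
  funext i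
  rw [zmod_two_eq_iff_eq_zero_iff, ← dotProduct_single_one s, ← dotProduct_single_one t,
    ← parityChar_eq_one_iff, ← parityChar_eq_one_iff, hst]

theorem sum_parityChar_eq_zero [DecidableEq ι] {s : ι → ZMod 2} (hs : s ≠ 0) :
    ∑ x, parityChar s x = 0 := by
  rw [AddChar.sum_eq_zero_iff_ne_zero]
  have hzero : parityChar (0 : ι → ZMod 2) = 0 :=
    AddChar.eq_zero_iff.2 fun x ↦ parityChar_eq_one_iff.2 (zero_dotProduct x)
  exact hzero ▸ parityChar_injective.ne hs

/-- The unnormalized Walsh coefficient of `g` at `s`, i.e. `2 ^ |ι|` times the Fourier coefficient: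
the correlation of the query `g` with the parity `s`. -/
def walshCoeff [DecidableEq ι] (g : (ι → ZMod 2) → ℝ) (s : ι → ZMod 2) : ℝ :=
  ∑ x, g x * parityChar s x

theorem card_mul_sq_le_of_le_abs_walshCoeff [DecidableEq ι] {g : (ι → ZMod 2) → ℝ}
    (hg : ∀ x, |g x| ≤ 1) {t : ℝ} (ht : 0 ≤ t) {S : Finset (ι → ZMod 2)}
    (hS : ∀ s ∈ S, t ≤ |walshCoeff g s|) :
    #S * t ^ 2 ≤ ((2 : ℝ) ^ Fintype.card ι) ^ 2 := by
  have hcoeff : ∀ s ∈ S, t ≤ ‖∑ x, g x * conj (parityChar s x)‖ := by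
    simpa [walshCoeff] using hS
  simpa [ZMod.card] using card_mul_sq_le_of_le_norm_sum_mul_conj parityChar_injective hg ht hcoeff

end Parity

theorem abs_expectOn_le_one {α : Type*} {S : Set α} (hS : S.Finite) {g : α → ℝ}
    (hg : ∀ x ∈ S, |g x| ≤ 1) : |expectOn S g| ≤ 1 := by
  rw [expectOn, abs_div, Nat.abs_cast, finsum_mem_eq_finite_toFinset_sum _ hS,
    Set.ncard_eq_toFinset_card _ hS]
  refine div_le_one_of_le₀ ?_ (Nat.cast_nonneg _)
  calc
    |∑ x ∈ hS.toFinset, g x| ≤ ∑ x ∈ hS.toFinset, |g x| := abs_sum_le_sum_abs _ _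
    _ ≤ #hS.toFinset • (1 : ℝ) := sum_le_card_nsmul _ _ _ fun x hx ↦ hg x (hS.mem_toFinset.1 hx)
    _ = #hS.toFinset := nsmul_one _

section PositiveSet

variable {n : ℕ} {s : Fin n → ZMod 2} {g : (Fin n → ZMod 2) → ℝ} {ξ : ℝ}

theorem finsum_mem_Spos (s : Fin n → ZMod 2) (g : (Fin n → ZMod 2) → ℝ) :
    ∑ᶠ x ∈ Spos n s, g x = (∑ x, g x + walshCoeff g s) / 2 - g 0 := by
  have hSpos : Spos n s = ↑((univ.filter fun x ↦ s ⬝ᵥ x = 0).erase 0) := by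
    ext x
    rw [mem_coe, mem_erase, mem_filter_univ]
    exact Iff.rfl
  have hfilter : ∑ x with s ⬝ᵥ x = 0, g x = (∑ x, g x + walshCoeff g s) / 2 := by
    rw [sum_filter, walshCoeff, ← sum_add_distrib, sum_div]
    refine sum_congr rfl fun x _ ↦ ?_
    rw [parityChar_apply]
    split_ifs <;> ring
  rw [hSpos, finsum_mem_coe_finset, sum_erase_eq_sub (by simp), hfilter]

theorem ncard_Spos (hs : s ≠ 0) : ((Spos n s).ncard : ℝ) = 2 ^ n / 2 - 1 := by
  have hcard : ∑ᶠ x ∈ Spos n s, (1 : ℝ) = (Spos n s).ncard := by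
    simp [finsum_mem_eq_finite_toFinset_sum _ (Set.toFinite _), ← Set.ncard_eq_toFinset_card]
  rw [← hcard, finsum_mem_Spos]
  simp [walshCoeff, sum_parityChar_eq_zero hs, ZMod.card]

theorem expectOn_Spos_sub_expectOn_univ (hn : 2 ≤ n) (hs : s ≠ 0) :
    expectOn (Spos n s) g - expectOn Set.univ g =
      (walshCoeff g s + 2 * (expectOn Set.univ g - g 0)) / (2 ^ n - 2) := by
  have hpow : (2 : ℝ) ^ 2 ≤ 2 ^ n := by gcongr; norm_num
  have hne : (2 : ℝ) ^ n - 2 ≠ 0 := by linarith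
  have huniv : expectOn Set.univ g = (∑ x, g x) / 2 ^ n := by
    simp [expectOn, finsum_eq_sum_of_fintype, Set.ncard_univ, ZMod.card]
  rw [huniv, expectOn, finsum_mem_Spos, ncard_Spos hs]
  field_simp
  ring

theorem abs_expectOn_Spos_sub_expectOn_univ_le (hn : 2 ≤ n) (hs : s ≠ 0) (hg : ∀ x, |g x| ≤ 1) :
    |expectOn (Spos n s) g - expectOn Set.univ g| ≤ (|walshCoeff g s| + 4) / (2 ^ n - 2) := by
  have hpow : (2 : ℝ) ^ 2 ≤ 2 ^ n := by gcongr; norm_num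
  have hpos : (0 : ℝ) < 2 ^ n - 2 := by linarith
  have huniv : |expectOn Set.univ g| ≤ 1 := abs_expectOn_le_one Set.finite_univ fun x _ ↦ hg x
  rw [expectOn_Spos_sub_expectOn_univ hn hs, abs_div, abs_of_pos hpos]
  gcongr
  calc
    |walshCoeff g s + 2 * (expectOn Set.univ g - g 0)|
        ≤ |walshCoeff g s| + 2 * |expectOn Set.univ g - g 0| := by
      simpa [abs_mul] using abs_add_le (walshCoeff g s) (2 * (expectOn Set.univ g - g 0))
    _ ≤ |walshCoeff g s| + 4 := by linarith [abs_sub (expectOn Set.univ g) (g 0), hg 0]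

theorem le_abs_walshCoeff_of_not_xiIndep2 (hξ : 0 < ξ) (hξn : 8 + 4 * ξ ≤ ξ * 2 ^ n)
    (hs : s ≠ 0) (hg : ∀ x, |g x| ≤ 1) (hdep : ¬ XiIndep2 n s g ξ) :
    ξ * 2 ^ n / 2 ≤ |walshCoeff g s| := by
  have hpow : (2 : ℝ) ^ 2 < 2 ^ n := lt_of_mul_lt_mul_left (by linarith) hξ.le
  have hn : 2 < n := (pow_lt_pow_iff_right₀ one_lt_two).1 hpow
  have hlt := (not_le.1 hdep).trans_le (abs_expectOn_Spos_sub_expectOn_univ_le hn.le hs hg)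
  rw [lt_div_iff₀ (by linarith)] at hlt
  linarith

theorem ncard_not_xiIndep2_le (hξ : 0 < ξ) (hξn : 8 + 4 * ξ ≤ ξ * 2 ^ n) (hg : ∀ x, |g x| ≤ 1) :
    ({s | s ≠ 0 ∧ ¬ XiIndep2 n s g ξ}.ncard : ℝ) ≤ 4 / ξ ^ 2 := by
  classical
  rw [Set.ncard_eq_toFinset_card']
  have hcount := card_mul_sq_le_of_le_abs_walshCoeff hg (t := ξ * 2 ^ n / 2) (by positivity)
    (S := {s | s ≠ 0 ∧ ¬ XiIndep2 n s g ξ}.toFinset) fun s hs ↦ by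
      obtain ⟨hs, hdep⟩ := Set.mem_toFinset.1 hs
      exact le_abs_walshCoeff_of_not_xiIndep2 hξ hξn hs hg hdep
  rw [Fintype.card_fin] at hcount
  rw [le_div_iff₀ (by positivity)]
  refine le_of_mul_le_mul_right ?_ (show (0 : ℝ) < (2 ^ n) ^ 2 by positivity)
  linarith

theorem ncard_sep_dotProduct_le {P : Set (Fin n → ZMod 2)} (hP : 0 ∉ P) {x : Fin n → ZMod 2}
    (hx : x ≠ 0) : ({s ∈ P | ∑ i, s i * x i = 0}.ncard : ℝ) ≤ 2 ^ n / 2 - 1 := by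
  rw [← ncard_Spos hx]
  gcongr
  · exact Set.toFinite _
  · rintro s ⟨hs, hsx⟩
    exact ⟨ne_of_mem_of_not_mem hs hP, (dotProduct_comm x s).trans hsx⟩

end PositiveSet

/-- The set `P` of nonzero secrets `s` for which `¬⊕_s` is `ξ`-independent from every query in `G`,
i.e. those not excluded when each query is answered by its average over the cube. -/
def survivors (n : ℕ) (G : Finset ((Fin n → ZMod 2) → ℝ)) (ξ : ℝ) : Set (Fin n → ZMod 2) :=
  {s | s ≠ 0 ∧ ∀ g ∈ G, XiIndep2 n s g ξ}

section Survivors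

variable {n : ℕ} {G : Finset ((Fin n → ZMod 2) → ℝ)} {ξ q : ℝ}

theorem zero_notMem_survivors : 0 ∉ survivors n G ξ := fun h ↦ h.1 rfl

theorem compl_survivors :
    (survivors n G ξ)ᶜ = insert 0 (⋃ g ∈ G, {s | s ≠ 0 ∧ ¬ XiIndep2 n s g ξ}) := by
  ext s
  by_cases hs : s = 0 <;> simp [survivors, hs]

theorem le_ncard_survivors (hG : ∀ g ∈ G, ∀ x, |g x| ≤ 1) (hξ : 0 < ξ)
    (hξn : 8 + 4 * ξ ≤ ξ * 2 ^ n) :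
    2 ^ n - #G * (4 / ξ ^ 2) - 1 ≤ ((survivors n G ξ).ncard : ℝ) := by
  have hexcluded : ((⋃ g ∈ G, {s | s ≠ 0 ∧ ¬ XiIndep2 n s g ξ}).ncard : ℝ) ≤ #G * (4 / ξ ^ 2) :=
    calc
      _ ≤ ∑ g ∈ G, ({s | s ≠ 0 ∧ ¬ XiIndep2 n s g ξ}.ncard : ℝ) := by
        exact_mod_cast G.set_ncard_biUnion_le _
      _ ≤ #G • (4 / ξ ^ 2) :=
        sum_le_card_nsmul _ _ _ fun g hg ↦ ncard_not_xiIndep2_le hξ hξn (hG g hg)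
      _ = #G * (4 / ξ ^ 2) := nsmul_eq_mul _ _
  have hcompl : ((survivors n G ξ)ᶜ.ncard : ℝ) ≤ #G * (4 / ξ ^ 2) + 1 := by
    rw [compl_survivors]
    refine le_trans ?_ (add_le_add_left hexcluded 1)
    exact_mod_cast Set.ncard_insert_le _ _
  have htotal : ((survivors n G ξ).ncard : ℝ) + (survivors n G ξ)ᶜ.ncard = 2 ^ n := by
    rw [← Nat.cast_add, Set.ncard_add_ncard_compl]
    simp [ZMod.card]
  linarith

-- From here on `q` plays the role of `2 ^ (n / 4)`, so that no real exponents are needed.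
theorem le_ncard_survivors_inv (hG : ∀ g ∈ G, ∀ x, |g x| ≤ 1) (hq : 0 < q) (hqn : q ^ 4 = 2 ^ n)
    (hcard : #G ≤ q) : q ^ 4 - 4 * q ^ 3 - 1 ≤ ((survivors n G q⁻¹).ncard : ℝ) := by
  obtain hq4 | hq4 := le_total q 4
  · have hle : q ^ 4 ≤ 4 * q ^ 3 := by rw [pow_succ' q 3]; gcongr
    linarith [Nat.cast_nonneg (α := ℝ) (survivors n G q⁻¹).ncard]
  · have hinv : q⁻¹ ≤ 1 := inv_le_one_of_one_le₀ (by linarith)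
    have hcube : (4 : ℝ) ^ 3 ≤ q ^ 3 := by gcongr
    have hpow : q⁻¹ * 2 ^ n = q ^ 3 := by rw [← hqn]; field_simp
    calc
      q ^ 4 - 4 * q ^ 3 - 1 = 2 ^ n - q * (4 / q⁻¹ ^ 2) - 1 := by rw [hqn]; field_simp
      _ ≤ 2 ^ n - #G * (4 / q⁻¹ ^ 2) - 1 := by gcongr
      _ ≤ (survivors n G q⁻¹).ncard := le_ncard_survivors hG (inv_pos.2 hq) (by linarith)

theorem survivors_inv_nonempty (hG : ∀ g ∈ G, ∀ x, |g x| ≤ 1) (hq : 0 < q) (hqn : q ^ 4 = 2 ^ n)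
    (hcard : #G ≤ q) (hn : 9 ≤ n) : (survivors n G q⁻¹).Nonempty := by
  have hpow : (9 / 2 : ℝ) ^ 4 < q ^ 4 := by
    calc
      (9 / 2 : ℝ) ^ 4 < 2 ^ 9 := by norm_num
      _ ≤ 2 ^ n := by gcongr; norm_num
      _ = q ^ 4 := hqn.symm
  have hq' : 9 / 2 < q := lt_of_pow_lt_pow_left₀ 4 hq.le hpow
  have hlead : 9 / 2 * q ^ 3 ≤ q ^ 4 := by rw [pow_succ' q 3]; gcongr
  have hpos : (0 : ℝ) < (survivors n G q⁻¹).ncard :=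
    lt_of_lt_of_le (by linarith) (le_ncard_survivors_inv hG hq hqn hcard)
  exact Set.nonempty_of_ncard_ne_zero (by exact_mod_cast hpos.ne')

theorem ncard_sep_survivors_inv_le (hG : ∀ g ∈ G, ∀ x, |g x| ≤ 1) (hq : 0 < q)
    (hqn : q ^ 4 = 2 ^ n) (hcard : #G ≤ q) {x : Fin n → ZMod 2} (hx : x ≠ 0) :
    ({s ∈ survivors n G q⁻¹ | ∑ i, s i * x i = 0}.ncard : ℝ) ≤
      (1 / 2 + 4 / q) * (survivors n G q⁻¹).ncard := by
  obtain hq8 | hq8 := le_total q 8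
  · have hone : 1 ≤ 1 / 2 + 4 / q := by
      have : 4 / 8 ≤ 4 / q := by gcongr
      linarith
    calc
      _ ≤ ((survivors n G q⁻¹).ncard : ℝ) := by
        exact_mod_cast Set.ncard_le_ncard (Set.sep_subset _ _) (Set.toFinite _)
      _ ≤ _ := le_mul_of_one_le_left (Nat.cast_nonneg _) hone
  · have hinv : q⁻¹ ≤ 8⁻¹ := by gcongr
    have hcube : 8 * q ^ 2 ≤ q ^ 3 := by rw [pow_succ' q 2]; gcongr
    calc
      _ ≤ (2 : ℝ) ^ n / 2 - 1 := ncard_sep_dotProduct_le zero_notMem_survivors hx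
      _ = q ^ 4 / 2 - 1 := by rw [hqn]
      _ ≤ q ^ 4 / 2 + 2 * q ^ 3 - 16 * q ^ 2 - 1 / 2 - 4 * q⁻¹ := by linarith
      _ = (1 / 2 + 4 / q) * (q ^ 4 - 4 * q ^ 3 - 1) := by field_simp; ring
      _ ≤ _ := by gcongr; exact le_ncard_survivors_inv hG hq hqn hcard

end Survivors

theorem stmt4_general {n : ℕ} {G : Finset ((Fin n → ZMod 2) → ℝ)}
    (hG : ∀ g ∈ G, ∀ x, |g x| ≤ 1) (hcard : (#G : ℝ) ≤ 2 ^ ((n : ℝ) / 4)) :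
    ((survivors n G (2 ^ (-(n : ℝ) / 4))).ncard : ℝ) ≥
        2 ^ (n : ℝ) - 2 ^ (3 * (n : ℝ) / 4 + 2) - 1 ∧
      (9 ≤ n → (survivors n G (2 ^ (-(n : ℝ) / 4))).Nonempty) ∧
      ∀ x : Fin n → ZMod 2, x ≠ 0 →
        ({s ∈ survivors n G (2 ^ (-(n : ℝ) / 4)) | ∑ i, s i * x i = 0}.ncard : ℝ) ≤
          (1 / 2 + 1 / 2 ^ ((n : ℝ) / 4 - 2)) *
            (survivors n G (2 ^ (-(n : ℝ) / 4))).ncard := by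
  have hq : (0 : ℝ) < 2 ^ ((n : ℝ) / 4) := by positivity
  have hpow (k : ℕ) : ((2 : ℝ) ^ ((n : ℝ) / 4)) ^ k = 2 ^ (k * (n : ℝ) / 4) := by
    rw [← Real.rpow_mul_natCast zero_le_two]; congr 1; ring
  have hpow_four : ((2 : ℝ) ^ ((n : ℝ) / 4)) ^ 4 = 2 ^ (n : ℝ) := by
    rw [hpow]; congr 1; push_cast; ring
  have hpow_three : (2 : ℝ) ^ (3 * (n : ℝ) / 4 + 2) = 4 * (2 ^ ((n : ℝ) / 4)) ^ 3 := by
    rw [hpow, Real.rpow_add two_pos]; norm_num [mul_comm]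
  have hsub_two : 1 / (2 : ℝ) ^ ((n : ℝ) / 4 - 2) = 4 / 2 ^ ((n : ℝ) / 4) := by
    rw [Real.rpow_sub two_pos]; norm_num
  have hqn := hpow_four.trans (Real.rpow_natCast 2 n)
  rw [neg_div, Real.rpow_neg zero_le_two, hpow_three, hsub_two, ← hpow_four]
  exact ⟨le_ncard_survivors_inv hG hq hqn hcard, survivors_inv_nonempty hG hq hqn hcard,
    fun _ ↦ ncard_sep_survivors_inv_le hG hq hqn hcard⟩

/-- after at most `2^(n/4)` queries, each answered with the domain
average, the surviving candidate set `P` of negative parity predicates has at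
least `2^n - 2^(3n/4+2) - 1` elements, and every nonzero point `x` satisfies
`s·x = 0` for at most a `(1/2 + 2^(-(n/4-2)))` fraction of the `s ∈ P`. -/
theorem stmt4 : ∃ N : ℕ, ∀ n : ℕ, N ≤ n →
    ∀ G : Finset ((Fin n → ZMod 2) → ℝ),
    (∀ g ∈ G, ∀ x, g x = 1 ∨ g x = -1) →
    (G.card : ℝ) ≤ (2 : ℝ) ^ ((n : ℝ) / 4) →
    ∀ P : Set (Fin n → ZMod 2),
    P = {s | s ≠ 0 ∧ ∀ g ∈ G, XiIndep2 n s g ((2 : ℝ) ^ (-(n : ℝ) / 4))} →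
    ((P.ncard : ℝ) ≥ (2 : ℝ) ^ (n : ℝ) - (2 : ℝ) ^ (3 * (n : ℝ) / 4 + 2) - 1) ∧
    P.Nonempty ∧
    ∀ x : Fin n → ZMod 2, x ≠ 0 →
      (({s ∈ P | ∑ i, s i * x i = 0}).ncard : ℝ)
        ≤ (1 / 2 + 1 / (2 : ℝ) ^ ((n : ℝ) / 4 - 2)) * P.ncard := by
  refine ⟨9, fun n hn G hG hcard P hP => hP ▸ ?_⟩
  obtain ⟨hlower, hnonempty, hx⟩ := stmt4_general
    (fun g hg x => by rcases hG g hg x with h | h <;> simp [h]) hcard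
  exact ⟨hlower, hnonempty hn, hx⟩
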